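/- Let C ⊆ ℤ² be finite, D = ⋃_{c ∈ C} cell(c), and S, T ⊆ C with |S| = |T| = n. Consider n unlabeled unit squares, where a configuration assigns each square a position x ∈ ℝ² such that the closed cells cell(x) of distinct squares have pairwise disjoint interiors and cell(x) ⊆ D for every square; a move changes the position of a single square along a continuous path γ : [0,1] → ℝ² such that at every time cell(γ(u)) ⊆ D and the interior of cell(γ(u)) is disjoint from the cell of every other square; a valid movement schedule is a finite sequence of moves. Then there exists a valid movement schedule transforming the configuration with squares at the points of S into a configuration whose set of positions is exactly T if and only if for every connected component K of the grid graph on C, |S ∩ K| = |T ∩ K|. -/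

import Mathlib

/-- The closed axis-aligned unit square with bottom-left corner `x`. -/
def cell (x : ℝ × ℝ) : Set (ℝ × ℝ) := Set.Icc x.1 (x.1 + 1) ×ˢ Set.Icc x.2 (x.2 + 1)

/-- The canonical embedding of an integer grid point into the plane. -/
def toR2 (p : ℤ × ℤ) : ℝ × ℝ := ((p.1 : ℝ), (p.2 : ℝ))

/-- Reachability in the grid graph on the vertex set `C ⊆ ℤ²` (edges join points of `C`
at L¹-distance exactly 1); `gridReach C p q` says `p` and `q` lie in the same connected
component of this graph. -/
def gridReach (C : Set (ℤ × ℤ)) : ℤ × ℤ → ℤ × ℤ → Prop :=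
  Relation.ReflTransGen (fun a b => a ∈ C ∧ b ∈ C ∧ |a.1 - b.1| + |a.2 - b.2| = 1)

/-- A single valid move inside the domain `D` for `n` unit squares: one square `i`
translates along a continuous path `γ`, all other squares stay put, and at every time the
moving square's cell stays inside `D` and its interior is disjoint from every other
square's cell. -/
def Move (n : ℕ) (D : Set (ℝ × ℝ)) (c c' : Fin n → ℝ × ℝ) : Prop :=
  ∃ i : Fin n, (∀ j : Fin n, j ≠ i → c' j = c j) ∧
    ∃ γ : ℝ → ℝ × ℝ, ContinuousOn γ (Set.Icc 0 1) ∧ γ 0 = c i ∧ γ 1 = c' i ∧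
      ∀ u ∈ Set.Icc (0 : ℝ) 1, cell (γ u) ⊆ D ∧
        ∀ j : Fin n, j ≠ i → interior (cell (γ u)) ∩ cell (c j) = ∅

/-!
Moving a square continuously inside the region never changes the grid component of the rounded-down
position: a unit square fits in the region exactly when all grid points at sup-distance less than
`1` from its corner belong to `C`, and any two such grid points are joined inside `C` through a
third one. Conversely, since the squares are unlabeled, exchanging the contents of two adjacent
cells is always realizable (by one slide, or by doing nothing). Adjacent transpositions generate all
transpositions inside a component, and these suffice to carry `S` to `T` when the counts agree.
-/

open Equiv Finset Relation

section AdjacentSwaps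

variable {V : Type*} [DecidableEq V]

/-- The monoid of permutations of the vertices of `G` that are products of transpositions of
adjacent vertices; it acts on sets of vertices by exchanging the contents of adjacent vertices. -/
def adjSwapClosure (G : SimpleGraph V) : Submonoid (Perm V) :=
  Submonoid.closure {σ | ∃ a b, G.Adj a b ∧ σ = swap a b}

theorem swap_mem_adjSwapClosure_of_reachable {G : SimpleGraph V} {p q : V}
    (h : G.Reachable p q) : swap p q ∈ adjSwapClosure G := by
  rw [SimpleGraph.reachable_iff_reflTransGen] at h
  induction h with
  | refl => exact swap_self p ▸ one_mem (adjSwapClosure G)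
  | tail _ hadj ih =>
    exact SubmonoidClass.swap_mem_trans _ ih (Submonoid.subset_closure ⟨_, _, hadj, rfl⟩)

theorem image_swap_eq_self_of_mem_iff_mem {s : Set V} {a b : V} (hab : a ∈ s ↔ b ∈ s) :
    swap a b '' s = s := by
  rw [image_eq_preimage_symm, symm_swap]
  exact Set.ext fun v => (apply_swap_eq_self (v := (· ∈ s)) (propext hab) v).to_iff

theorem card_filter_map_swap {p q : V} {P : V → Prop} [DecidablePred P] (hpq : P p ↔ P q)
    (S : Finset V) : #{v ∈ S.map (swap p q).toEmbedding | P v} = #{v ∈ S | P v} := by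
  rw [filter_map, card_map]
  exact congrArg card (filter_congr fun v _ => (apply_swap_eq_self (propext hpq) v).to_iff)

theorem map_swap_sdiff {S T : Finset V} {p q : V} (hp : p ∈ S \ T) (hq : q ∈ T \ S) :
    S.map (swap p q).toEmbedding \ T = (S \ T).erase p := by
  ext v
  simp only [mem_sdiff, mem_map_equiv, symm_swap, mem_erase] at hp hq ⊢
  grind

theorem exists_mem_sdiff_of_card_filter_le {S T : Finset V} {P : V → Prop} [DecidablePred P]
    (hcard : #{v ∈ S | P v} ≤ #{v ∈ T | P v}) {p : V} (hp : p ∈ S \ T) (hPp : P p) :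
    ∃ q ∈ T \ S, P q := by
  by_contra! hnone
  have hsub : {v ∈ T | P v} ⊆ {v ∈ S | P v} := by grind
  have hpT : p ∈ {v ∈ T | P v} := by
    rw [eq_of_subset_of_card_le hsub hcard]
    exact mem_filter.2 ⟨(mem_sdiff.1 hp).1, hPp⟩
  exact (mem_sdiff.1 hp).2 (mem_filter.1 hpT).1

theorem exists_mem_adjSwapClosure_map_eq {G : SimpleGraph V} [DecidableRel G.Reachable]
    {S T : Finset V} (hcard : #S = #T)
    (hcomp : ∀ p, #{q ∈ S | G.Reachable p q} ≤ #{q ∈ T | G.Reachable p q}) :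
    ∃ σ ∈ adjSwapClosure G, S.map σ.toEmbedding = T := by
  induction hk : #(S \ T) generalizing S with
  | zero =>
    rw [card_eq_zero, sdiff_eq_empty_iff_subset] at hk
    exact ⟨1, one_mem _, S.map_refl.trans (eq_of_subset_of_card_le hk hcard.ge)⟩
  | succ k ih =>
    obtain ⟨p, hp⟩ : (S \ T).Nonempty := card_pos.1 (by lia)
    obtain ⟨q, hq, hpq⟩ := exists_mem_sdiff_of_card_filter_le (hcomp p) hp (.refl p)
    have hcomp' (r : V) : #{v ∈ S.map (swap p q).toEmbedding | G.Reachable r v}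
        ≤ #{v ∈ T | G.Reachable r v} := by
      rw [card_filter_map_swap ⟨(·.trans hpq), (·.trans hpq.symm)⟩]
      exact hcomp r
    have hdiff : #(S.map (swap p q).toEmbedding \ T) = k := by
      rw [map_swap_sdiff hp hq, card_erase_of_mem hp, hk, Nat.add_sub_cancel]
    obtain ⟨σ, hσ, hσT⟩ := ih (by rw [card_map, hcard]) hcomp' hdiff
    refine ⟨σ * swap p q, mul_mem hσ (swap_mem_adjSwapClosure_of_reachable hpq), ?_⟩
    rwa [Finset.map_map] at hσT

end AdjacentSwaps

theorem ncard_range_inter_eq {ι α : Type*} {e f : ι → α} (he : Function.Injective e)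
    (hf : Function.Injective f) {P : Set α} (h : ∀ i, e i ∈ P ↔ f i ∈ P) :
    (Set.range e ∩ P).ncard = (Set.range f ∩ P).ncard := by
  have hpre : e ⁻¹' P = f ⁻¹' P := Set.ext h
  rw [← Set.image_preimage_eq_range_inter, ← Set.image_preimage_eq_range_inter,
    Set.ncard_image_of_injective _ he, Set.ncard_image_of_injective _ hf, hpre]

section UnitIntervals

theorem Ioo_inter_Icc_add_one_nonempty_iff {K : Type*} [Field K] [LinearOrder K]
    [IsStrictOrderedRing K] {a b : K} :
    (Set.Ioo a (a + 1) ∩ Set.Icc b (b + 1)).Nonempty ↔ |a - b| < 1 := by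
  rw [abs_lt]
  constructor
  · rintro ⟨y, ⟨hay, hya⟩, hby, hyb⟩
    constructor <;> linarith
  · rintro ⟨hab, hba⟩
    refine ⟨(a + b + 1) / 2, ⟨?_, ?_⟩, ?_, ?_⟩ <;> linarith

variable {K : Type*} [CommRing K] [LinearOrder K] [IsStrictOrderedRing K]

theorem exists_int_abs_sub_lt_one_mem_Icc [FloorRing K] {x y : K}
    (hy : y ∈ Set.Icc x (x + 1)) :
    ∃ k : ℤ, |x - k| < 1 ∧ y ∈ Set.Icc (k : K) (k + 1) := by
  obtain ⟨hxy, hyx⟩ := hy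
  rcases le_total y (⌊x⌋ + 1) with hle | hge
  · refine ⟨⌊x⌋, ?_, (Int.floor_le x).trans hxy, hle⟩
    rw [Int.self_sub_floor, Int.abs_fract]
    exact Int.fract_lt_one x
  · have hceil_le : (⌈x⌉ : K) ≤ ⌊x⌋ + 1 := by exact_mod_cast Int.ceil_le_floor_add_one x
    refine ⟨⌈x⌉, ?_, hceil_le.trans hge, by linarith [Int.le_ceil x]⟩
    rw [abs_sub_lt_iff]
    constructor <;> linarith [Int.le_ceil x, Int.ceil_lt_add_one x]

theorem abs_sub_le_one_of_abs_sub_lt_one {x : K} {k l : ℤ} (hk : |x - k| < 1)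
    (hl : |x - l| < 1) : |k - l| ≤ 1 := by
  have h : |(k : K) - l| < 2 := by
    rw [abs_lt] at hk hl ⊢
    constructor <;> linarith
  norm_cast at h
  lia

theorem int_mem_uIcc_of_abs_sub_lt_one {a b k : ℤ} {x : K} (hx : x ∈ Set.uIcc (a : K) b)
    (hk : |x - k| < 1) : k ∈ Set.uIcc a b := by
  rw [abs_lt] at hk
  rw [Set.mem_uIcc] at hx ⊢
  refine hx.imp ?_ ?_ <;> rintro ⟨hlo, hhi⟩
  all_goals
    constructor <;> rw [← Int.lt_add_one_iff, ← Int.cast_lt (R := K)] <;> push_cast <;> linarith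

end UnitIntervals

section GridGraph

/-- The graph on `ℤ²` whose edges join points of `C` at L¹-distance `1`. Points outside `C` are
kept as isolated vertices, so that no subtype of `ℤ²` is needed. -/
def gridGraph (C : Set (ℤ × ℤ)) : SimpleGraph (ℤ × ℤ) where
  Adj a b := a ∈ C ∧ b ∈ C ∧ |a.1 - b.1| + |a.2 - b.2| = 1
  symm := ⟨fun a b ⟨ha, hb, hab⟩ =>
    ⟨hb, ha, by rwa [abs_sub_comm b.1, abs_sub_comm b.2]⟩⟩
  loopless := ⟨fun a ⟨_, _, h⟩ => by simp at h⟩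

variable {C : Set (ℤ × ℤ)} {p q : ℤ × ℤ}

theorem gridReach_iff_reachable : gridReach C p q ↔ (gridGraph C).Reachable p q :=
  ((gridGraph C).reachable_iff_reflTransGen p q).symm

theorem gridGraph_reachable_of_abs_add_abs_le_one (hp : p ∈ C) (hq : q ∈ C)
    (h : |p.1 - q.1| + |p.2 - q.2| ≤ 1) : (gridGraph C).Reachable p q := by
  by_cases hadj : |p.1 - q.1| + |p.2 - q.2| = 1
  · exact SimpleGraph.Adj.reachable ⟨hp, hq, hadj⟩
  · have hpq : p = q := by grind
    exact hpq ▸ .refl p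

end GridGraph

section Cells

/-- The part of the plane covered by the cells of `C`, inside which the squares move. -/
def gridRegion (C : Set (ℤ × ℤ)) : Set (ℝ × ℝ) := ⋃ c ∈ C, cell (toR2 c)

/-- The grid point obtained by rounding down both coordinates; it locates a square at a real
position in the grid graph. -/
noncomputable def floorPoint (x : ℝ × ℝ) : ℤ × ℤ := (⌊x.1⌋, ⌊x.2⌋)

theorem floorPoint_toR2 (p : ℤ × ℤ) : floorPoint (toR2 p) = p := by
  simp [floorPoint, toR2]

theorem toR2_injective : Function.Injective toR2 :=
  Function.LeftInverse.injective floorPoint_toR2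

theorem dist_toR2_lt_iff {x : ℝ × ℝ} {p : ℤ × ℤ} {r : ℝ} :
    dist x (toR2 p) < r ↔ |x.1 - p.1| < r ∧ |x.2 - p.2| < r := by
  rw [Prod.dist_eq, max_lt_iff, Real.dist_eq, Real.dist_eq, toR2]

theorem dist_floorPoint_lt_one (x : ℝ × ℝ) : dist x (toR2 (floorPoint x)) < 1 := by
  simp only [dist_toR2_lt_iff, floorPoint, Int.self_sub_floor, Int.abs_fract, Int.fract_lt_one,
    and_self]

theorem eq_of_dist_toR2_lt_one {p q : ℤ × ℤ} (h : dist (toR2 p) (toR2 q) < 1) : p = q := by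
  rw [dist_toR2_lt_iff] at h
  simp only [toR2] at h
  norm_cast at h
  simp only [Int.abs_lt_one_iff, sub_eq_zero] at h
  exact Prod.ext h.1 h.2

theorem interior_cell_inter_cell_nonempty_iff {x y : ℝ × ℝ} :
    (interior (cell x) ∩ cell y).Nonempty ↔ dist x y < 1 := by
  rw [cell, cell, interior_prod_eq, interior_Icc, interior_Icc, Set.prod_inter_prod,
    Set.prod_nonempty_iff, Ioo_inter_Icc_add_one_nonempty_iff, Ioo_inter_Icc_add_one_nonempty_iff,
    Prod.dist_eq, max_lt_iff, Real.dist_eq, Real.dist_eq]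

theorem cell_subset_gridRegion_iff {C : Set (ℤ × ℤ)} {x : ℝ × ℝ} :
    cell x ⊆ gridRegion C ↔ ∀ p, dist x (toR2 p) < 1 → p ∈ C := by
  constructor
  · intro hx p hp
    rw [dist_comm] at hp
    obtain ⟨y, hyp, hyx⟩ := interior_cell_inter_cell_nonempty_iff.2 hp
    obtain ⟨c, hc, hyc⟩ := Set.mem_iUnion₂.1 (hx hyx)
    have hpc : p = c :=
      eq_of_dist_toR2_lt_one (interior_cell_inter_cell_nonempty_iff.1 ⟨y, hyp, hyc⟩)
    exact hpc ▸ hc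
  · rintro hC y ⟨hy₁, hy₂⟩
    obtain ⟨k, hk, hyk⟩ := exists_int_abs_sub_lt_one_mem_Icc hy₁
    obtain ⟨l, hl, hyl⟩ := exists_int_abs_sub_lt_one_mem_Icc hy₂
    exact Set.mem_iUnion₂.2 ⟨(k, l), hC (k, l) (dist_toR2_lt_iff.2 ⟨hk, hl⟩), hyk, hyl⟩

end Cells

section MovesPreserveComponents

variable {C : Set (ℤ × ℤ)}

theorem gridGraph_reachable_of_dist_lt_one {x : ℝ × ℝ} (hx : cell x ⊆ gridRegion C)
    {p q : ℤ × ℤ} (hp : dist x (toR2 p) < 1) (hq : dist x (toR2 q) < 1) :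
    (gridGraph C).Reachable p q := by
  rw [cell_subset_gridRegion_iff] at hx
  have hpC := hx p hp
  have hqC := hx q hq
  rw [dist_toR2_lt_iff] at hp hq
  have hcorner : (q.1, p.2) ∈ C := hx _ (dist_toR2_lt_iff.2 ⟨hq.1, hp.2⟩)
  have horizontal : (gridGraph C).Reachable p (q.1, p.2) :=
    gridGraph_reachable_of_abs_add_abs_le_one hpC hcorner
      (by simpa using abs_sub_le_one_of_abs_sub_lt_one hp.1 hq.1)
  have vertical : (gridGraph C).Reachable (q.1, p.2) q :=
    gridGraph_reachable_of_abs_add_abs_le_one hcorner hqC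
      (by simpa using abs_sub_le_one_of_abs_sub_lt_one hp.2 hq.2)
  exact horizontal.trans vertical

theorem gridGraph_reachable_floorPoint_of_path {X : Type*} [TopologicalSpace X]
    [PreconnectedSpace X] {γ : X → ℝ × ℝ} (hγ : Continuous γ)
    (hC : ∀ u, cell (γ u) ⊆ gridRegion C) (u v : X) :
    (gridGraph C).Reachable (floorPoint (γ u)) (floorPoint (γ v)) := by
  have hconst : IsLocallyConstant
      fun u => (gridGraph C).connectedComponentMk (floorPoint (γ u)) := by
    rw [IsLocallyConstant.iff_eventually_eq]
    intro u
    have hnear : ∀ᶠ v in nhds u, dist (γ v) (toR2 (floorPoint (γ u))) < 1 :=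
      (hγ.dist continuous_const).continuousAt.eventually_lt_const (dist_floorPoint_lt_one (γ u))
    filter_upwards [hnear] with v hv
    exact SimpleGraph.ConnectedComponent.eq.2
      (gridGraph_reachable_of_dist_lt_one (hC v) (dist_floorPoint_lt_one (γ v)) hv)
  exact SimpleGraph.ConnectedComponent.eq.1 (hconst.apply_eq_of_preconnectedSpace u v)

theorem Move.gridGraph_reachable_floorPoint {n : ℕ} {c c' : Fin n → ℝ × ℝ}
    (h : Move n (gridRegion C) c c') (i : Fin n) :
    (gridGraph C).Reachable (floorPoint (c i)) (floorPoint (c' i)) := by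
  obtain ⟨k, hfixed, γ, hγ, h0, h1, hvalid⟩ := h
  rcases eq_or_ne i k with rfl | hik
  · rw [← h0, ← h1]
    exact gridGraph_reachable_floorPoint_of_path hγ.domRestrict
      (fun u => (hvalid u u.2).1) (0 : Set.Icc (0 : ℝ) 1) 1
  · rw [hfixed i hik]

theorem gridGraph_reachable_floorPoint_of_schedule {n : ℕ} {c c' : Fin n → ℝ × ℝ}
    (h : ReflTransGen (Move n (gridRegion C)) c c') (i : Fin n) :
    (gridGraph C).Reachable (floorPoint (c i)) (floorPoint (c' i)) := by
  induction h with
  | refl => exact .refl _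
  | tail _ hmove ih => exact ih.trans (hmove.gridGraph_reachable_floorPoint i)

theorem floorPoint_comp_injective_and_range_eq {n : ℕ} {T : Finset (ℤ × ℤ)} (hT : #T = n)
    {c : Fin n → ℝ × ℝ} (hc : ∀ v ∈ T, ∃ i, c i = toR2 v) :
    Function.Injective (floorPoint ∘ c) ∧ Set.range (floorPoint ∘ c) = T := by
  have hsub : T ⊆ univ.image (floorPoint ∘ c) := fun v hv => by
    obtain ⟨i, hi⟩ := hc v hv
    exact mem_image.2 ⟨i, mem_univ i, by rw [Function.comp_apply, hi, floorPoint_toR2]⟩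
  have hcard : #(univ.image (floorPoint ∘ c)) ≤ #T := by
    simpa [hT] using card_image_le (s := univ) (f := floorPoint ∘ c)
  have heq := eq_of_subset_of_card_le hsub hcard
  refine ⟨?_, by rw [heq, coe_image, coe_univ, Set.image_univ]⟩
  rw [← Set.injOn_univ, ← coe_univ, ← card_image_iff, ← heq, hT, card_fin]

theorem ncard_component_eq_of_schedule {n : ℕ} {S T : Finset (ℤ × ℤ)} (hT : #T = n)
    {e : Fin n → ℤ × ℤ} (he : Function.Injective e) (hS : Set.range e = S)
    {c : Fin n → ℝ × ℝ} (hrun : ReflTransGen (Move n (gridRegion C)) (toR2 ∘ e) c)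
    (hc : ∀ v ∈ T, ∃ i, c i = toR2 v) (p : ℤ × ℤ) :
    {q | q ∈ S ∧ gridReach C p q}.ncard = {q | q ∈ T ∧ gridReach C p q}.ncard := by
  obtain ⟨hinj, hrange⟩ := floorPoint_comp_injective_and_range_eq hT hc
  have hsame (i : Fin n) : gridReach C p (e i) ↔ gridReach C p (floorPoint (c i)) := by
    have hreach := gridGraph_reachable_floorPoint_of_schedule hrun i
    rw [Function.comp_apply, floorPoint_toR2] at hreach
    simp only [gridReach_iff_reachable]
    exact ⟨(·.trans hreach), (·.trans hreach.symm)⟩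
  have hcount := ncard_range_inter_eq he hinj (P := {q | gridReach C p q}) hsame
  rwa [hS, hrange] at hcount

end MovesPreserveComponents

section SlidesRealizeSwaps

variable {C : Set (ℤ × ℤ)} {n : ℕ} {e : Fin n → ℤ × ℤ}

theorem eq_or_eq_of_dist_lineMap_lt_one {a b p : ℤ × ℤ} (hab : |a.1 - b.1| + |a.2 - b.2| = 1)
    {u : ℝ} (hu : u ∈ Set.Icc (0 : ℝ) 1)
    (hp : dist (AffineMap.lineMap (toR2 a) (toR2 b) u) (toR2 p) < 1) : p = a ∨ p = b := by
  rw [dist_toR2_lt_iff, AffineMap.fst_lineMap, AffineMap.snd_lineMap] at hp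
  have lineMap_mem_uIcc {x y : ℝ} : AffineMap.lineMap x y u ∈ Set.uIcc x y :=
    segment_eq_uIcc x y ▸ lineMap_mem_segment ℝ x y hu
  have hp₁ : p.1 ∈ Set.uIcc a.1 b.1 :=
    int_mem_uIcc_of_abs_sub_lt_one lineMap_mem_uIcc hp.1
  have hp₂ : p.2 ∈ Set.uIcc a.2 b.2 :=
    int_mem_uIcc_of_abs_sub_lt_one lineMap_mem_uIcc hp.2
  rw [Set.mem_uIcc] at hp₁ hp₂
  simp only [Prod.ext_iff]
  grind

theorem move_swap_of_adj (he : Function.Injective e) {i : Fin n} {b : ℤ × ℤ}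
    (hadj : (gridGraph C).Adj (e i) b) (hb : b ∉ Set.range e) :
    Move n (gridRegion C) (toR2 ∘ e) (toR2 ∘ swap (e i) b ∘ e) := by
  obtain ⟨haC, hbC, hab⟩ := hadj
  have hne (j : Fin n) : e j ≠ b := fun h => hb ⟨j, h⟩
  refine ⟨i, fun j hj => ?_, AffineMap.lineMap (toR2 (e i)) (toR2 b),
    AffineMap.lineMap_continuous.continuousOn, by simp, by simp, fun u hu => ⟨?_, fun j hj => ?_⟩⟩
  · simp only [Function.comp_apply, swap_apply_of_ne_of_ne (he.ne hj) (hne j)]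
  · rw [cell_subset_gridRegion_iff]
    intro p hp
    rcases eq_or_eq_of_dist_lineMap_lt_one hab hu hp with rfl | rfl <;> assumption
  · rw [← Set.not_nonempty_iff_eq_empty, interior_cell_inter_cell_nonempty_iff]
    intro hp
    exact (eq_or_eq_of_dist_lineMap_lt_one hab hu hp).elim (he.ne hj) (hne j)

theorem exists_schedule_swap_of_adj (he : Function.Injective e) {a b : ℤ × ℤ}
    (hadj : (gridGraph C).Adj a b) :
    ∃ e' : Fin n → ℤ × ℤ, Function.Injective e' ∧ Set.range e' = swap a b '' Set.range e ∧
      ReflTransGen (Move n (gridRegion C)) (toR2 ∘ e) (toR2 ∘ e') := by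
  have slide {a b : ℤ × ℤ} (hadj : (gridGraph C).Adj a b) (ha : a ∈ Set.range e)
      (hb : b ∉ Set.range e) : ReflTransGen (Move n (gridRegion C)) (toR2 ∘ e)
        (toR2 ∘ swap a b ∘ e) := by
    obtain ⟨i, rfl⟩ := ha
    exact .single (move_swap_of_adj he hadj hb)
  by_cases ha : a ∈ Set.range e <;> by_cases hb : b ∈ Set.range e
  · exact ⟨e, he, (image_swap_eq_self_of_mem_iff_mem (iff_of_true ha hb)).symm, .refl⟩
  · exact ⟨swap a b ∘ e, (swap a b).injective.comp he, Set.range_comp _ _, slide hadj ha hb⟩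
  · exact ⟨swap a b ∘ e, (swap a b).injective.comp he, Set.range_comp _ _,
      swap_comm a b ▸ slide hadj.symm hb ha⟩
  · exact ⟨e, he, (image_swap_eq_self_of_mem_iff_mem (iff_of_false ha hb)).symm, .refl⟩

theorem exists_schedule_of_mem_adjSwapClosure {σ : Perm (ℤ × ℤ)}
    (hσ : σ ∈ adjSwapClosure (gridGraph C)) (he : Function.Injective e) :
    ∃ e' : Fin n → ℤ × ℤ, Function.Injective e' ∧ Set.range e' = σ '' Set.range e ∧
      ReflTransGen (Move n (gridRegion C)) (toR2 ∘ e) (toR2 ∘ e') := by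
  induction hσ using Submonoid.closure_induction generalizing e with
  | mem σ hσ =>
    obtain ⟨a, b, hadj, rfl⟩ := hσ
    exact exists_schedule_swap_of_adj he hadj
  | one => exact ⟨e, he, by simp, .refl⟩
  | mul σ τ _ _ ihσ ihτ =>
    obtain ⟨e₁, he₁, hrange₁, hrun₁⟩ := ihτ he
    obtain ⟨e₂, he₂, hrange₂, hrun₂⟩ := ihσ he₁
    exact ⟨e₂, he₂, by rw [hrange₂, hrange₁, Perm.coe_mul, Set.image_comp], hrun₁.trans hrun₂⟩

theorem exists_schedule_of_ncard_component_eq {S T : Finset (ℤ × ℤ)} (hSC : ↑S ⊆ C)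
    (hcard : #S = #T) (he : Function.Injective e) (hS : Set.range e = S)
    (hcomp : ∀ p ∈ C, {q | q ∈ S ∧ gridReach C p q}.ncard
      = {q | q ∈ T ∧ gridReach C p q}.ncard) :
    ∃ e' : Fin n → ℤ × ℤ, Set.range e' = T ∧
      ReflTransGen (Move n (gridRegion C)) (toR2 ∘ e) (toR2 ∘ e') := by
  classical
  have hcount (p : ℤ × ℤ) : #{q ∈ S | (gridGraph C).Reachable p q}
      ≤ #{q ∈ T | (gridGraph C).Reachable p q} := by
    rcases eq_empty_or_nonempty {q ∈ S | (gridGraph C).Reachable p q} with hempty | ⟨r, hr⟩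
    · simp [hempty]
    · obtain ⟨hrS, hpr⟩ := mem_filter.1 hr
      have same_component (q : ℤ × ℤ) : (gridGraph C).Reachable p q ↔ gridReach C r q :=
        ⟨fun h => gridReach_iff_reachable.2 (hpr.symm.trans h),
          fun h => hpr.trans (gridReach_iff_reachable.1 h)⟩
      simpa only [← Set.ncard_coe_finset, coe_filter, same_component] using (hcomp r (hSC hrS)).le
  obtain ⟨σ, hσ, hσT⟩ := exists_mem_adjSwapClosure_map_eq hcard hcount
  obtain ⟨e', -, hrange, hrun⟩ := exists_schedule_of_mem_adjSwapClosure hσ he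
  refine ⟨e', ?_, hrun⟩
  rw [hrange, hS, ← hσT, coe_map, coe_toEmbedding]

end SlidesRealizeSwaps

theorem unlabeled_unit_square_reconfiguration_iff_general
    {C : Set (ℤ × ℤ)} {S T : Finset (ℤ × ℤ)} (hSC : ↑S ⊆ C)
    {n : ℕ} (hS : #S = n) (hT : #T = n) :
    (∃ (e : Fin n → ℤ × ℤ) (final : Fin n → ℝ × ℝ),
        Function.Injective e ∧ (∀ v, v ∈ S ↔ ∃ i, e i = v) ∧
        ReflTransGen (Move n (gridRegion C)) (fun i => toR2 (e i)) final ∧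
        (∀ v, v ∈ T ↔ ∃ i, final i = toR2 v)) ↔
      ∀ p ∈ C, {q | q ∈ S ∧ gridReach C p q}.ncard = {q | q ∈ T ∧ gridReach C p q}.ncard := by
  constructor
  · rintro ⟨e, final, he, hSe, hrun, hfinal⟩ p -
    have hrange : Set.range e = S := Set.ext fun v => (hSe v).symm
    exact ncard_component_eq_of_schedule hT he hrange hrun (fun v => (hfinal v).1) p
  · intro hcomp
    let e : Fin n → ℤ × ℤ := Subtype.val ∘ (S.equivFinOfCardEq hS).symm
    have he : Function.Injective e := Subtype.val_injective.comp (Equiv.injective _)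
    have hrange : Set.range e = S := by
      rw [EquivLike.range_comp, Subtype.range_coe]
    obtain ⟨e', hrange', hrun⟩ :=
      exists_schedule_of_ncard_component_eq hSC (hS.trans hT.symm) he hrange hcomp
    refine ⟨e, toR2 ∘ e', he, fun v => ?_, hrun, fun v => ?_⟩
    · rw [← mem_coe, ← hrange, Set.mem_range]
    · simp only [← mem_coe, ← hrange', Set.mem_range, Function.comp_apply, toR2_injective.eq_iff]

/-- Decision characterization for bounded, unlabeled, unit-size squares: the `n` unit
squares starting on the cells of `S ⊆ C` can be reconfigured, by a finite sequence of
valid moves inside `D = ⋃_{c ∈ C} cell c`, into a configuration occupying exactly the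
cells of `T ⊆ C`, if and only if `S` and `T` have the same number of points in every
connected component of the grid graph on `C`. -/
theorem unlabeled_unit_square_reconfiguration_iff
    (C : Finset (ℤ × ℤ)) (D : Set (ℝ × ℝ)) (hD : D = ⋃ c ∈ C, cell (toR2 c))
    (S T : Finset (ℤ × ℤ)) (hSC : S ⊆ C) (hTC : T ⊆ C)
    (n : ℕ) (hS : S.card = n) (hT : T.card = n) :
    (∃ (e : Fin n → ℤ × ℤ) (final : Fin n → ℝ × ℝ),
        Function.Injective e ∧ (∀ v : ℤ × ℤ, v ∈ S ↔ ∃ i : Fin n, e i = v) ∧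
        Relation.ReflTransGen (Move n D) (fun i => toR2 (e i)) final ∧
        (∀ v : ℤ × ℤ, v ∈ T ↔ ∃ i : Fin n, final i = toR2 v)) ↔
      (∀ p ∈ C, {q : ℤ × ℤ | q ∈ S ∧ gridReach (↑C) p q}.ncard
        = {q : ℤ × ℤ | q ∈ T ∧ gridReach (↑C) p q}.ncard) := by
  subst hD
  exact unlabeled_unit_square_reconfiguration_iff_general (coe_subset.2 hSC) hS hT
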